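/- arXiv:2502.14237 — 2 statements merged into one kernel-verified Lean document; each statement's English description precedes it below -/
import Mathlib

section
/- For a homogeneous polynomial p of degree k ≥ 1 on ℝⁿ (n ≥ 2), ∫_{S^{n−1}} p = (k(n+k−2))⁻¹ ∫_{S^{n−1}} Δp. -/
open MeasureTheory Metric

/-- The partial derivative `∂ᵢ f` on `ℝⁿ = EuclideanSpace ℝ (Fin n)`. -/
noncomputable def pd (n : ℕ) (i : Fin n) (f : EuclideanSpace ℝ (Fin n) → ℝ)
    (x : EuclideanSpace ℝ (Fin n)) : ℝ :=
  fderiv ℝ f x (EuclideanSpace.single i 1)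

/-- The Euclidean Laplacian `Δf = ∑ᵢ ∂ᵢ∂ᵢ f` on `ℝⁿ`. -/
noncomputable def lap (n : ℕ) (f : EuclideanSpace ℝ (Fin n) → ℝ)
    (x : EuclideanSpace ℝ (Fin n)) : ℝ :=
  ∑ i, pd n i (pd n i f) x

open Set Real in
/-- The Gaussian moment of `s ↦ s ^ c` with respect to the radial measure `r ^ (d - 1) dr`. -/
theorem integrable_and_integral_gaussian_volumeIoiPow {d : ℕ} (hd : 1 ≤ d) {c : ℝ}
    (hc : 0 < d + c) :
    Integrable (fun r : Ioi (0 : ℝ) ↦ (r : ℝ) ^ c * exp (-(r : ℝ) ^ 2))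
        (Measure.volumeIoiPow (d - 1)) ∧
      ∫ r : Ioi (0 : ℝ), (r : ℝ) ^ c * exp (-(r : ℝ) ^ 2) ∂Measure.volumeIoiPow (d - 1)
        = 1 / 2 * Gamma ((d + c) / 2) := by
  have hq : -1 < (d : ℝ) - 1 + c := by linarith
  have key : ∀ r ∈ Ioi (0 : ℝ), r ^ ((d : ℝ) - 1 + c) * exp (-r ^ (2 : ℝ))
      = (r ^ (d - 1)).toNNReal • (r ^ c * exp (-r ^ 2)) := by
    intro r hr
    have hr' : 0 < r := hr
    rw [NNReal.smul_def, Real.coe_toNNReal _ (pow_nonneg hr'.le _), smul_eq_mul, rpow_add hr',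
      ← rpow_natCast r (d - 1), Nat.cast_sub hd, rpow_two]
    push_cast
    ring
  have hmeas : Measurable fun r : Ioi (0 : ℝ) ↦ ((r : ℝ) ^ (d - 1)).toNNReal :=
    (measurable_subtype_coe.pow_const _).real_toNNReal
  constructor
  · simp only [Measure.volumeIoiPow, ENNReal.ofReal]
    rw [integrable_withDensity_iff_integrable_smul hmeas]
    have h := (integrableOn_rpow_mul_exp_neg_rpow hq two_pos).congr_fun key measurableSet_Ioi
    exact (integrableOn_iff_comap_subtypeVal measurableSet_Ioi).1 h
  · simp only [Measure.volumeIoiPow, ENNReal.ofReal]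
    rw [integral_withDensity_eq_integral_smul hmeas,
      integral_subtype_comap measurableSet_Ioi
        fun r : ℝ ↦ (r ^ (d - 1)).toNNReal • (r ^ c * exp (-r ^ 2)),
      ← setIntegral_congr_fun measurableSet_Ioi key, integral_rpow_mul_exp_neg_rpow two_pos hq]
    congr 3
    ring

open Set Real in
/-- The Gaussian integral of a continuous positively homogeneous function in polar coordinates. -/
theorem integrable_and_integral_gaussian_mul_of_posHomogeneous {E : Type*} [NormedAddCommGroup E]
    [NormedSpace ℝ E] [FiniteDimensional ℝ E] [Nontrivial E] [MeasurableSpace E] [BorelSpace E]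
    (μ : Measure E) [μ.IsAddHaarMeasure] {f : E → ℝ} (hf : Continuous f) {c : ℝ}
    (hc : 0 < Module.finrank ℝ E + c)
    (hhom : ∀ t : ℝ, 0 < t → ∀ x, f (t • x) = t ^ c * f x) :
    Integrable (fun x ↦ exp (-‖x‖ ^ 2) * f x) μ ∧
      ∫ x, exp (-‖x‖ ^ 2) * f x ∂μ
        = (∫ y : sphere (0 : E) 1, f y ∂μ.toSphere)
          * (1 / 2 * Gamma ((Module.finrank ℝ E + c) / 2)) := by
  obtain ⟨hrad, hrad'⟩ :=
    integrable_and_integral_gaussian_volumeIoiPow (Module.finrank_pos (R := ℝ) (M := E)) hc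
  have hmp := μ.measurePreserving_homeomorphUnitSphereProd
  have hemb := (homeomorphUnitSphereProd E).measurableEmbedding
  have hpolar : (fun x : ({0}ᶜ : Set E) ↦ exp (-‖(x : E)‖ ^ 2) * f x)
      = (fun z : sphere (0 : E) 1 × Ioi (0 : ℝ) ↦ f z.1 * ((z.2 : ℝ) ^ c * exp (-(z.2 : ℝ) ^ 2)))
        ∘ homeomorphUnitSphereProd E := by
    ext x
    have hx : 0 < ‖(x : E)‖ := norm_pos_iff.2 x.2
    have h := hhom ‖(x : E)‖ hx (‖(x : E)‖⁻¹ • (x : E))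
    rw [smul_inv_smul₀ hx.ne'] at h
    simp only [Function.comp_apply, homeomorphUnitSphereProd_apply_snd_coe,
      homeomorphUnitSphereProd_apply_fst_coe]
    rw [h]
    ring
  have hsph : Integrable (fun y : sphere (0 : E) 1 ↦ f y) μ.toSphere :=
    (hf.comp continuous_subtype_val).integrable_of_hasCompactSupport
      (HasCompactSupport.of_compactSpace _)
  constructor
  · rw [← restrict_compl_singleton (μ := μ) 0, ← IntegrableOn,
      integrableOn_iff_comap_subtypeVal (measurableSet_singleton _).compl]
    change Integrable (fun x : ({0}ᶜ : Set E) ↦ exp (-‖(x : E)‖ ^ 2) * f x) _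
    rw [hpolar, hmp.integrable_comp_emb hemb]
    exact hsph.mul_prod hrad
  · have hpunctured : ∫ x, exp (-‖x‖ ^ 2) * f x ∂μ
        = ∫ x : ({0}ᶜ : Set E), exp (-‖(x : E)‖ ^ 2) * f x ∂(μ.comap (↑)) := by
      rw [integral_subtype_comap (measurableSet_singleton _).compl
        fun x ↦ exp (-‖x‖ ^ 2) * f x, restrict_compl_singleton]
    rw [hpunctured, hpolar]
    simp only [Function.comp_def]
    rw [hmp.integral_comp hemb fun z : sphere (0 : E) 1 × Ioi (0 : ℝ) ↦
        f z.1 * ((z.2 : ℝ) ^ c * exp (-(z.2 : ℝ) ^ 2)),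
      integral_prod_mul (fun y : sphere (0 : E) 1 ↦ f y)
        (fun r : Ioi (0 : ℝ) ↦ (r : ℝ) ^ c * exp (-(r : ℝ) ^ 2)), hrad']

/-- A partial derivative of a smooth function is smooth. -/
theorem ContDiff.pd {n : ℕ} {f : EuclideanSpace ℝ (Fin n) → ℝ} (hf : ContDiff ℝ (⊤ : ℕ∞) f)
    (i : Fin n) : ContDiff ℝ (⊤ : ℕ∞) (pd n i f) :=
  (hf.fderiv_right (m := (⊤ : ℕ∞)) (by simp)).clm_apply contDiff_const

/-- A partial derivative lowers the degree of positive homogeneity by one. -/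
theorem pd_smul_of_posHomogeneous {n : ℕ} {f : EuclideanSpace ℝ (Fin n) → ℝ} {c : ℝ}
    (hhom : ∀ t : ℝ, 0 < t → ∀ x, f (t • x) = t ^ c * f x) (i : Fin n)
    (t : ℝ) (ht : 0 < t) (x : EuclideanSpace ℝ (Fin n)) :
    pd n i f (t • x) = t ^ (c - 1) * pd n i f x := by
  have h : t • fderiv ℝ f (t • x) = t ^ c • fderiv ℝ f x := by
    rw [← fderiv_comp_smul, funext (hhom t ht)]
    exact congrFun (fderiv_const_smul_field (f := f) (t ^ c)) x
  have h' := congrArg (fun L ↦ L (EuclideanSpace.single i 1)) h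
  simp only [smul_apply, smul_eq_mul] at h'
  rw [Real.rpow_sub_one ht.ne', pd, pd]
  field_simp
  linarith

/-- Euler's identity for positively homogeneous functions. -/
theorem sum_coord_mul_pd_of_posHomogeneous {n : ℕ} {f : EuclideanSpace ℝ (Fin n) → ℝ} {c : ℝ}
    (hf : Differentiable ℝ f) (hhom : ∀ t : ℝ, 0 < t → ∀ x, f (t • x) = t ^ c * f x)
    (x : EuclideanSpace ℝ (Fin n)) : ∑ i, x i * pd n i f x = c * f x := by
  have hsum : ∑ i, x i * pd n i f x = fderiv ℝ f x x := by
    conv_rhs =>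
      enter [2]
      rw [← (EuclideanSpace.basisFun (Fin n) ℝ).sum_repr x]
    rw [map_sum]
    simp [pd]
  have h1 : HasDerivAt (fun t : ℝ ↦ f (t • x)) (fderiv ℝ f x x) 1 := by
    have hline : HasDerivAt (fun t : ℝ ↦ t • x) x 1 := by
      simpa using (hasDerivAt_id (1 : ℝ)).smul_const x
    have hfx : HasFDerivAt f (fderiv ℝ f x) ((1 : ℝ) • x) := by
      simpa using (hf x).hasFDerivAt
    exact hfx.comp_hasDerivAt 1 hline
  have h2 : HasDerivAt (fun t : ℝ ↦ t ^ c * f x) (c * f x) 1 := by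
    simpa using (Real.hasDerivAt_rpow_const (x := 1) (p := c) (Or.inl one_ne_zero)).mul_const (f x)
  have hev : (fun t : ℝ ↦ f (t • x)) =ᶠ[nhds 1] fun t ↦ t ^ c * f x := by
    filter_upwards [lt_mem_nhds one_pos] with t ht using hhom t ht x
  rw [hsum]
  exact h1.unique (h2.congr_of_eventuallyEq hev)

/-- The partial derivatives of the Gaussian `x ↦ exp (-‖x‖ ^ 2)`. -/
theorem pd_gaussian {n : ℕ} (i : Fin n) (x : EuclideanSpace ℝ (Fin n)) :
    pd n i (fun x ↦ Real.exp (-‖x‖ ^ 2)) x = -2 * (Real.exp (-‖x‖ ^ 2) * x i) := by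
  have h : HasFDerivAt (fun x : EuclideanSpace ℝ (Fin n) ↦ Real.exp (-‖x‖ ^ 2))
      (Real.exp (-‖x‖ ^ 2) • (-(2 • innerSL ℝ x : EuclideanSpace ℝ (Fin n) →L[ℝ] ℝ))) x :=
    ((hasStrictFDerivAt_norm_sq x).hasFDerivAt.neg).exp
  rw [pd, h.fderiv]
  simp [EuclideanSpace.inner_single_right]
  ring

/-- For a smooth positively homogeneous function `f` of degree `c`, the Gaussian integral of `Δf`
is `2c` times that of `f`. -/
theorem integral_gaussian_mul_lap {n : ℕ} (hn : 2 ≤ n) {c : ℝ} (hc : 0 < n + c - 2)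
    {f : EuclideanSpace ℝ (Fin n) → ℝ} (hf : ContDiff ℝ (⊤ : ℕ∞) f)
    (hhom : ∀ t : ℝ, 0 < t → ∀ x, f (t • x) = t ^ c * f x) :
    ∫ x, Real.exp (-‖x‖ ^ 2) * lap n f x = 2 * c * ∫ x, Real.exp (-‖x‖ ^ 2) * f x := by
  have : NeZero n := ⟨by omega⟩
  have hhom1 := fun i ↦ pd_smul_of_posHomogeneous hhom i
  have hhom2 := fun i ↦ pd_smul_of_posHomogeneous (hhom1 i) i
  have hint0 : ∀ i, Integrable fun x ↦ Real.exp (-‖x‖ ^ 2) * (x i * pd n i f x) := fun i ↦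
    (integrable_and_integral_gaussian_mul_of_posHomogeneous (c := c) volume
      (f := fun x : EuclideanSpace ℝ (Fin n) ↦ x i * pd n i f x)
      (Continuous.mul (by fun_prop) (hf.pd i).continuous)
      (by simp; linarith) fun t ht x ↦ by
        rw [hhom1 i t ht, Real.rpow_sub_one ht.ne', PiLp.smul_apply, smul_eq_mul]
        field_simp).1
  have hint1 : ∀ i, Integrable fun x ↦ Real.exp (-‖x‖ ^ 2) * pd n i f x := fun i ↦
    (integrable_and_integral_gaussian_mul_of_posHomogeneous volume (hf.pd i).continuous
      (by simp; linarith) (hhom1 i)).1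
  have hint2 : ∀ i, Integrable fun x ↦ Real.exp (-‖x‖ ^ 2) * pd n i (pd n i f) x := fun i ↦
    (integrable_and_integral_gaussian_mul_of_posHomogeneous volume ((hf.pd i).pd i).continuous
      (by simp; linarith) (hhom2 i)).1
  have hparts : ∀ i, ∫ x, Real.exp (-‖x‖ ^ 2) * pd n i (pd n i f) x
      = 2 * ∫ x, Real.exp (-‖x‖ ^ 2) * (x i * pd n i f x) := by
    intro i
    have hrw : ∀ x, pd n i (fun x ↦ Real.exp (-‖x‖ ^ 2)) x * pd n i f x
        = -2 * (Real.exp (-‖x‖ ^ 2) * (x i * pd n i f x)) := fun x ↦ by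
      rw [pd_gaussian]
      ring
    have h := integral_mul_fderiv_eq_neg_fderiv_mul_of_integrable
      (μ := (volume : Measure (EuclideanSpace ℝ (Fin n))))
      (f := fun x ↦ Real.exp (-‖x‖ ^ 2)) (g := pd n i f) (v := EuclideanSpace.single i 1)
      (((hint0 i).const_mul (-2)).congr (.of_forall fun x ↦ (hrw x).symm)) (hint2 i) (hint1 i)
      (fun x _ ↦ ((hasStrictFDerivAt_norm_sq x).hasFDerivAt.neg).exp.differentiableAt)
      (fun x _ ↦ (hf.pd i).differentiable (by simp) x)
    refine h.trans ?_
    simp only [pd] at hrw ⊢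
    rw [integral_congr_ae (.of_forall hrw), integral_const_mul]
    ring
  simp only [lap, Finset.mul_sum]
  rw [integral_finsetSum _ fun i _ ↦ hint2 i, Finset.sum_congr rfl fun i _ ↦ hparts i,
    ← Finset.mul_sum, ← integral_finsetSum _ fun i _ ↦ hint0 i, ← integral_const_mul]
  rw [← integral_const_mul]
  refine integral_congr_ae (.of_forall fun x ↦ ?_)
  dsimp only
  rw [← Finset.mul_sum, sum_coord_mul_pd_of_posHomogeneous (hf.differentiable (by simp)) hhom]
  ring

/-- For a homogeneous polynomial `p` of degree `k ≥ 1` on `ℝⁿ` (`n ≥ 2`),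
`∫_{S^{n−1}} p = (k(n+k−2))⁻¹ ∫_{S^{n−1}} Δp`, where the sphere carries its
standard surface measure. -/
theorem sphere_integral_eq_lap (n k : ℕ) (hn : 2 ≤ n) (hk : 1 ≤ k)
    (p : EuclideanSpace ℝ (Fin n) → ℝ)
    (hsmooth : ContDiff ℝ (⊤ : ℕ∞) p)
    (hhom : ∀ (t : ℝ) (x : EuclideanSpace ℝ (Fin n)), p (t • x) = t ^ k * p x) :
    ∫ y : sphere (0 : EuclideanSpace ℝ (Fin n)) 1,
        p (y : EuclideanSpace ℝ (Fin n))
        ∂((volume : Measure (EuclideanSpace ℝ (Fin n))).toSphere)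
      = (1 / ((k : ℝ) * ((n : ℝ) + (k : ℝ) - 2))) *
        ∫ y : sphere (0 : EuclideanSpace ℝ (Fin n)) 1,
          lap n p (y : EuclideanSpace ℝ (Fin n))
          ∂((volume : Measure (EuclideanSpace ℝ (Fin n))).toSphere) := by
  have : NeZero n := ⟨by omega⟩
  have hn' : (2 : ℝ) ≤ n := by exact_mod_cast hn
  have hk' : (1 : ℝ) ≤ k := by exact_mod_cast hk
  have hpos : (0 : ℝ) < n + k - 2 := by linarith
  have hhom0 : ∀ t : ℝ, 0 < t → ∀ x, p (t • x) = t ^ (k : ℝ) * p x := fun t _ x ↦ by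
    rw [hhom, Real.rpow_natCast]
  have hhom2 : ∀ t : ℝ, 0 < t → ∀ x, lap n p (t • x) = t ^ ((k : ℝ) - 1 - 1) * lap n p x :=
    fun t ht x ↦ by
      simp only [lap, Finset.mul_sum]
      exact Finset.sum_congr rfl fun i _ ↦
        pd_smul_of_posHomogeneous (pd_smul_of_posHomogeneous hhom0 i) i t ht x
  have hlap : Continuous (lap n p) :=
    continuous_finsetSum _ fun i _ ↦ ((hsmooth.pd i).pd i).continuous
  have hp := (integrable_and_integral_gaussian_mul_of_posHomogeneous volume hsmooth.continuous
    (by simp; linarith) hhom0).2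
  have hl := (integrable_and_integral_gaussian_mul_of_posHomogeneous volume hlap
    (by simp; linarith) hhom2).2
  have h := integral_gaussian_mul_lap hn hpos hsmooth hhom0
  rw [hp, hl, finrank_euclideanSpace_fin] at h
  have hGpos : 0 < Real.Gamma (((n : ℝ) + k - 2) / 2) := Real.Gamma_pos_of_pos (by linarith)
  have hG : Real.Gamma (((n : ℝ) + k) / 2)
      = ((n : ℝ) + k - 2) / 2 * Real.Gamma (((n : ℝ) + k - 2) / 2) := by
    rw [← Real.Gamma_add_one (by positivity)]
    congr 1
    ring
  rw [hG, show (n : ℝ) + ((k : ℝ) - 1 - 1) = n + k - 2 by ring] at h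
  have hkne : (k : ℝ) ≠ 0 := by positivity
  field_simp
  refine mul_right_cancel₀ hGpos.ne' ?_
  linear_combination -2 * h
end

section
/- Let n > 4, w(x) = (1+|x|²)^{−(n−4)/2}, V a smooth vector field on ℝⁿ, S = 𝒟V its conformal Killing image, i.e. Sᵢⱼ = ∂ᵢVⱼ + ∂ⱼVᵢ − (2/n)(div V)δᵢⱼ, and Ψ = Vᵢ∂ᵢw + ((n−4)/(2n))(div V)w. Then Δ²Ψ − (n−2)n(n+2)(n+4) w^{8/(n−4)} Ψ = −L₁[S]w + Δ(∂ᵢ(Sᵢⱼ∂ⱼw)) + ∂ᵢ(Sᵢⱼ∂ⱼΔw), where L₁[S]w := (4/(n−2))(Ṙic[S])ᵢⱼ∂²ᵢⱼw − α¹ₙ Ṙ[S]Δw − α²ₙ ∂ₖṘ[S]∂ₖw + ((n−4)/2)Q̇[S]w, with Ṙic[S]ᵢⱼ = ½(Sⱼₖ,ᵢₖ + Sᵢₖ,ⱼₖ − Sᵢⱼ,ₖₖ), Ṙ[S] = Sᵢⱼ,ᵢⱼ, Q̇[S] = −(2(n−1))⁻¹ΔṘ[S], α¹ₙ = (4+(n−2)²)/(2(n−2)(n−1)),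 α²ₙ = (n−6)/(2(n−1)). -/
namespace CommutingDerivations

variable {ι A : Type*} [Fintype ι] [CommRing A] [Algebra ℝ A] (d : ι → Derivation ℝ A A)

/-- The sum of the squares of a family of derivations. -/
def laplacian (f : A) : A := ∑ i, d i (d i f)

/-- The divergence of a vector field with respect to a family of derivations. -/
def divergence (V : ι → A) : A := ∑ k, d k (V k)

/-- The conformal Killing operator, with trace normalised by the scalar `N`. -/
noncomputable def killing [DecidableEq ι] (N : ℝ) (V : ι → A) (i j : ι) : A :=
  d i (V j) + d j (V i) - (2 / N) • (if i = j then divergence d V else 0)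

theorem laplacian_add (f g : A) : laplacian d (f + g) = laplacian d f + laplacian d g := by
  simp [laplacian, Finset.sum_add_distrib]

theorem laplacian_sub (f g : A) : laplacian d (f - g) = laplacian d f - laplacian d g := by
  simp [laplacian, Finset.sum_sub_distrib]

theorem laplacian_smul (r : ℝ) (f : A) : laplacian d (r • f) = r • laplacian d f := by
  simp [laplacian, Finset.smul_sum]

theorem laplacian_sum {κ : Type*} (s : Finset κ) (f : κ → A) :
    laplacian d (∑ k ∈ s, f k) = ∑ k ∈ s, laplacian d (f k) := by
  simp only [laplacian, map_sum]
  exact Finset.sum_comm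

theorem laplacian_mul (f g : A) :
    laplacian d (f * g)
      = laplacian d f * g + (2 : ℝ) • ∑ i, d i f * d i g + f * laplacian d g := by
  simp only [laplacian, Derivation.leibniz, map_add, smul_eq_mul, Finset.mul_sum,
    Finset.sum_mul, Finset.smul_sum, ← Finset.sum_add_distrib]
  refine Finset.sum_congr rfl fun i _ => ?_
  rw [two_smul]
  ring

theorem laplacian_sum_mul {κ : Type*} [Fintype κ] (a b : κ → A) :
    laplacian d (∑ k, a k * b k)
      = ∑ k, laplacian d (a k) * b k + (2 : ℝ) • ∑ k, ∑ i, d i (a k) * d i (b k)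
        + ∑ k, a k * laplacian d (b k) := by
  simp only [laplacian_sum, laplacian_mul, Finset.sum_add_distrib, Finset.smul_sum]

theorem laplacian_sum_sum_mul {κ κ' : Type*} [Fintype κ] [Fintype κ'] (a b : κ → κ' → A) :
    laplacian d (∑ k, ∑ l, a k l * b k l)
      = ∑ k, ∑ l, laplacian d (a k l) * b k l
        + (2 : ℝ) • ∑ k, ∑ l, ∑ i, d i (a k l) * d i (b k l)
        + ∑ k, ∑ l, a k l * laplacian d (b k l) := by
  simp only [laplacian_sum, laplacian_mul, Finset.sum_add_distrib, Finset.smul_sum]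

variable {d}

theorem laplacian_apply_comm (hd : ∀ i j f, d i (d j f) = d j (d i f)) (i : ι) (f : A) :
    laplacian d (d i f) = d i (laplacian d f) := by
  simp only [laplacian, map_sum]
  refine Finset.sum_congr rfl fun j _ => ?_
  rw [hd j i f, hd j i]

theorem sum_apply_apply_comm (hd : ∀ i j f, d i (d j f) = d j (d i f)) (V : ι → A) (i : ι) :
    ∑ j, d j (d i (V j)) = d i (divergence d V) := by
  simp only [divergence, map_sum]
  exact Finset.sum_congr rfl fun j _ => hd _ _ _

theorem sum_laplacian_apply (hd : ∀ i j f, d i (d j f) = d j (d i f)) (V : ι → A) :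
    ∑ j, d j (laplacian d (V j)) = laplacian d (divergence d V) := by
  simp only [divergence, laplacian_sum, laplacian_apply_comm hd]

variable [DecidableEq ι]

theorem killing_symm (N : ℝ) (V : ι → A) (i j : ι) :
    killing d N V i j = killing d N V j i := by
  simp only [killing, eq_comm (a := i) (b := j), add_comm (d i (V j))]

theorem sum_apply_killing (hd : ∀ i j f, d i (d j f) = d j (d i f)) (N : ℝ) (V : ι → A) (i : ι) :
    ∑ j, d j (killing d N V i j)
      = (1 - 2 / N) • d i (divergence d V) + laplacian d (V i) := by
  have h : ∑ j, d j (if i = j then divergence d V else 0) = d i (divergence d V) := by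
    rw [Finset.sum_eq_single i] <;> simp +contextual [eq_comm]
  simp only [killing, map_sub, map_add, Derivation.map_smul, Finset.sum_sub_distrib, Finset.sum_add_distrib,
    ← Finset.smul_sum, h, sum_apply_apply_comm hd]
  rw [← laplacian]
  module

theorem divergence_killing_gradient (hd : ∀ i j f, d i (d j f) = d j (d i f)) (N : ℝ)
    (V : ι → A) (f : A) :
    ∑ i, d i (∑ j, killing d N V i j * d j f)
      = (1 - 2 / N) • ∑ j, d j (divergence d V) * d j f + ∑ j, laplacian d (V j) * d j f
        + (2 : ℝ) • ∑ j, ∑ i, d i (V j) * d i (d j f)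
        - (2 / N) • (divergence d V * laplacian d f) := by
  have h₁ : ∑ i, ∑ j, d i (killing d N V i j) * d j f
      = (1 - 2 / N) • ∑ j, d j (divergence d V) * d j f + ∑ j, laplacian d (V j) * d j f := by
    rw [Finset.sum_comm]
    simp only [← Finset.sum_mul, Finset.smul_sum, ← Finset.sum_add_distrib]
    refine Finset.sum_congr rfl fun j _ => ?_
    rw [Finset.sum_congr rfl fun i _ => congrArg (d i) (killing_symm N V i j),
      sum_apply_killing hd, add_mul, smul_mul_assoc]
  have h₂ : ∑ i, ∑ j, killing d N V i j * d i (d j f)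
      = (2 : ℝ) • ∑ j, ∑ i, d i (V j) * d i (d j f)
        - (2 / N) • (divergence d V * laplacian d f) := by
    have h₃ : ∑ i, ∑ j, d j (V i) * d i (d j f) = ∑ j, ∑ i, d i (V j) * d i (d j f) :=
      Finset.sum_congr rfl fun i _ => Finset.sum_congr rfl fun j _ => by rw [hd]
    have h₄ : ∑ i, ∑ j, d i (V j) * d i (d j f) = ∑ j, ∑ i, d i (V j) * d i (d j f) :=
      Finset.sum_comm
    have h₅ : ∑ i, ∑ j, ((2 / N) • (if i = j then divergence d V else 0)) * d i (d j f)
        = (2 / N) • (divergence d V * laplacian d f) := by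
      simp [laplacian, Finset.mul_sum, Finset.smul_sum]
    simp only [killing, sub_mul, add_mul, Finset.sum_sub_distrib, Finset.sum_add_distrib, h₃, h₄,
      h₅, two_smul]
  simp only [map_sum, Derivation.leibniz, smul_eq_mul, Finset.sum_add_distrib]
  rw [h₂, Finset.sum_congr rfl fun i _ => Finset.sum_congr rfl fun j _ =>
    mul_comm (d j f) (d i (killing d N V i j)), h₁]
  abel

theorem laplacian_killing (hd : ∀ i j f, d i (d j f) = d j (d i f)) (N : ℝ) (V : ι → A)
    (i j : ι) :
    laplacian d (killing d N V i j) = d i (laplacian d (V j)) + d j (laplacian d (V i))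
      - (2 / N) • (if i = j then laplacian d (divergence d V) else 0) := by
  have h : laplacian d (if i = j then divergence d V else 0)
      = if i = j then laplacian d (divergence d V) else 0 := by
    split_ifs <;> simp [laplacian]
  rw [killing, laplacian_sub, laplacian_add, laplacian_smul, laplacian_apply_comm hd,
    laplacian_apply_comm hd, h]

theorem linearized_scalar_killing (hd : ∀ i j f, d i (d j f) = d j (d i f)) (N : ℝ) (V : ι → A) :
    ∑ i, ∑ j, d j (d i (killing d N V i j))
      = (2 - 2 / N) • laplacian d (divergence d V) := by
  have h : ∀ i, ∑ j, d j (d i (killing d N V i j))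
      = (1 - 2 / N) • d i (d i (divergence d V)) + d i (laplacian d (V i)) := fun i => by
    simp only [hd _ i (killing d N V i _)]
    rw [← map_sum, sum_apply_killing hd, map_add, Derivation.map_smul]
  simp only [h, Finset.sum_add_distrib, ← Finset.smul_sum, sum_laplacian_apply hd]
  rw [← laplacian]
  module

theorem linearized_ricci_killing (hd : ∀ i j f, d i (d j f) = d j (d i f)) (N : ℝ) (V : ι → A)
    (i j : ι) :
    (1 / 2 : ℝ) • ∑ k, (d k (d i (killing d N V j k)) + d k (d j (killing d N V i k))
        - d k (d k (killing d N V i j)))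
      = (1 - 2 / N) • d i (d j (divergence d V))
        + (1 / N) • (if i = j then laplacian d (divergence d V) else 0) := by
  have h : ∀ i j, ∑ k, d k (d i (killing d N V j k))
      = (1 - 2 / N) • d i (d j (divergence d V)) + d i (laplacian d (V j)) := fun i j => by
    simp only [hd _ i (killing d N V j _)]
    rw [← map_sum, sum_apply_killing hd, map_add, Derivation.map_smul]
  have h' : ∑ k, d k (d k (killing d N V i j)) = _ := laplacian_killing hd N V i j
  rw [Finset.sum_sub_distrib, Finset.sum_add_distrib, h, h, h', hd j i]
  module

/-- First-order conformal covariance of the Paneitz operator under diffeomorphisms. -/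
theorem bilaplacian_conformal_lie (hd : ∀ i j f, d i (d j f) = d j (d i f)) {N : ℝ}
    (h₀ : N ≠ 0) (h₁ : N - 1 ≠ 0) (h₂ : N - 2 ≠ 0) (V : ι → A) (w : A)
    (S : ι → ι → A) (hS : S = killing d N V) (Ric : ι → ι → A)
    (hRic : ∀ i j, Ric i j = (1 / 2 : ℝ) • ∑ k, (d k (d i (S j k)) + d k (d j (S i k))
        - d k (d k (S i j))))
    (Rdot : A) (hRdot : Rdot = ∑ i, ∑ j, d j (d i (S i j))) :
    laplacian d (laplacian d
        (∑ i, V i * d i w + ((N - 4) / (2 * N)) • (divergence d V * w)))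
      - (∑ i, V i * d i (laplacian d (laplacian d w))
        + ((N + 4) / (2 * N)) • (divergence d V * laplacian d (laplacian d w)))
      = -((4 / (N - 2)) • ∑ i, ∑ j, Ric i j * d i (d j w)
          - ((4 + (N - 2) ^ 2) / (2 * (N - 2) * (N - 1))) • (Rdot * laplacian d w)
          - ((N - 6) / (2 * (N - 1))) • ∑ k, d k Rdot * d k w
          + ((N - 4) / 2) • ((-(1 / (2 * (N - 1)))) • laplacian d Rdot * w))
        + laplacian d (∑ i, d i (∑ j, S i j * d j w))
        + ∑ i, d i (∑ j, S i j * d j (laplacian d w)) := by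
  subst hS
  have hRic' : ∑ i, ∑ j, Ric i j * d i (d j w)
      = (1 - 2 / N) • ∑ i, ∑ j, d j (d i (divergence d V)) * d j (d i w)
        + (1 / N) • (laplacian d (divergence d V) * laplacian d w) := by
    have h : ∑ i, ∑ j, (if i = j then laplacian d (divergence d V) else 0) * d i (d j w)
        = laplacian d (divergence d V) * laplacian d w := by
      simp [laplacian, Finset.mul_sum]
    simp only [hRic, linearized_ricci_killing hd, add_mul, Finset.sum_add_distrib,
      smul_mul_assoc, ← Finset.smul_sum, h]
    congr 2
    exact Finset.sum_congr rfl fun i _ => Finset.sum_congr rfl fun j _ => by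
      rw [hd i j, hd i j w]
  rw [hRic', hRdot, linearized_scalar_killing hd, divergence_killing_gradient hd,
    divergence_killing_gradient hd]
  simp only [laplacian_add, laplacian_sub, laplacian_smul, laplacian_sum_mul,
    laplacian_sum_sum_mul, laplacian_mul, laplacian_apply_comm hd, Derivation.map_smul, smul_mul_assoc,
    ← Finset.smul_sum]
  match_scalars <;> field_simp <;> ring

end CommutingDerivations

open CommutingDerivations

/-- The algebra of smooth real functions on `ℝⁿ`. -/
def smoothFunctions (n : ℕ) : Subalgebra ℝ (EuclideanSpace ℝ (Fin n) → ℝ) where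
  carrier := {f | ContDiff ℝ (⊤ : ℕ∞) f}
  mul_mem' hf hg := by
    rw [Set.mem_ofPred_eq] at *
    exact ContDiff.mul hf hg
  add_mem' hf hg := by
    rw [Set.mem_ofPred_eq] at *
    exact ContDiff.add hf hg
  algebraMap_mem' r := by
    rw [Set.mem_ofPred_eq]
    exact contDiff_const

theorem mem_smoothFunctions {n : ℕ} {f : EuclideanSpace ℝ (Fin n) → ℝ} :
    f ∈ smoothFunctions n ↔ ContDiff ℝ (⊤ : ℕ∞) f := by
  rw [← SetLike.mem_coe]
  exact Set.mem_ofPred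

theorem differentiableAt_smoothFunctions {n : ℕ} (f : smoothFunctions n)
    (x : EuclideanSpace ℝ (Fin n)) : DifferentiableAt ℝ f.1 x :=
  (mem_smoothFunctions.1 f.2).contDiffAt.differentiableAt (by simp)

theorem contDiff_pd {n : ℕ} (i : Fin n) {f : EuclideanSpace ℝ (Fin n) → ℝ}
    (hf : ContDiff ℝ (⊤ : ℕ∞) f) : ContDiff ℝ (⊤ : ℕ∞) (pd n i f) :=
  (hf.fderiv_right (by simp)).clm_apply contDiff_const

/-- The partial derivative as a derivation of the algebra of smooth functions. -/
noncomputable def pdDerivation (n : ℕ) (i : Fin n) :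
    Derivation ℝ (smoothFunctions n) (smoothFunctions n) :=
  Derivation.mk'
    { toFun := fun f => ⟨pd n i f.1, mem_smoothFunctions.2 (contDiff_pd i (mem_smoothFunctions.1 f.2))⟩
      map_add' := fun f g => Subtype.ext <| funext fun x => by
        simp [pd, fderiv_add (differentiableAt_smoothFunctions f x) (differentiableAt_smoothFunctions g x)]
      map_smul' := fun r f => Subtype.ext <| funext fun x => by
        simp [pd, fderiv_const_smul (differentiableAt_smoothFunctions f x)] }
    fun f g => Subtype.ext <| funext fun x => by
      simp [pd, fderiv_mul (differentiableAt_smoothFunctions f x) (differentiableAt_smoothFunctions g x)]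

theorem coe_pdDerivation (n : ℕ) (i : Fin n) (f : smoothFunctions n) :
    (pdDerivation n i f : EuclideanSpace ℝ (Fin n) → ℝ) = pd n i f := rfl

theorem pdDerivation_comm (n : ℕ) (i j : Fin n) (f : smoothFunctions n) :
    pdDerivation n i (pdDerivation n j f) = pdDerivation n j (pdDerivation n i f) := by
  refine Subtype.ext <| funext fun x => ?_
  have hf : ContDiff ℝ (⊤ : ℕ∞) f.1 := mem_smoothFunctions.1 f.2
  have hd : DifferentiableAt ℝ (fderiv ℝ f.1) x :=
    (hf.fderiv_right (m := 1) (by norm_cast)).contDiffAt.differentiableAt (by simp)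
  have key : ∀ i j, pd n i (pd n j f.1) x = fderiv ℝ (fderiv ℝ f.1) x
      (EuclideanSpace.single i 1) (EuclideanSpace.single j 1) := fun i j => by
    change fderiv ℝ (fun y => fderiv ℝ f.1 y (EuclideanSpace.single j 1)) x _ = _
    rw [fderiv_clm_apply hd (differentiableAt_const _)]
    simp
  simp only [coe_pdDerivation, key]
  exact (hf.contDiffAt.isSymmSndFDerivAt (by simp; norm_cast)).eq _ _

theorem coe_sum_smoothFunctions {n : ℕ} {κ : Type*} (s : Finset κ) (f : κ → smoothFunctions n)
    (x : EuclideanSpace ℝ (Fin n)) :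
    (∑ k ∈ s, f k : smoothFunctions n).1 x = ∑ k ∈ s, (f k).1 x := by
  rw [AddSubmonoidClass.coe_finsetSum, Finset.sum_apply]

theorem coe_laplacian (n : ℕ) (f : smoothFunctions n) :
    (laplacian (pdDerivation n) f).1 = lap n f.1 := by
  funext x
  exact coe_sum_smoothFunctions _ _ _

/-- Powers of `1 + |x|²`. -/
noncomputable def bubble (n : ℕ) (s : ℝ) : smoothFunctions n :=
  ⟨fun x => (1 + ‖x‖ ^ 2) ^ s, mem_smoothFunctions.2 <|
    (contDiff_const.add (contDiff_norm_sq ℝ)).rpow_const_of_ne fun x => by positivity⟩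

theorem pd_bubble (n : ℕ) (s : ℝ) (i : Fin n) (x : EuclideanSpace ℝ (Fin n)) :
    pd n i (bubble n s).1 x = 2 * s * x i * (1 + ‖x‖ ^ 2) ^ (s - 1) := by
  have h : HasFDerivAt (fun y : EuclideanSpace ℝ (Fin n) => 1 + ‖y‖ ^ 2) _ x :=
    (hasStrictFDerivAt_norm_sq x).hasFDerivAt.const_add 1
  have h' := h.rpow_const (p := s) (Or.inl (by positivity))
  change fderiv ℝ (fun y : EuclideanSpace ℝ (Fin n) => (1 + ‖y‖ ^ 2) ^ s) x _ = _
  rw [h'.fderiv]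
  simp [EuclideanSpace.inner_single_right]
  ring

/-- The coordinate functions. -/
noncomputable def coordinate (n : ℕ) (i : Fin n) : smoothFunctions n :=
  ⟨fun x => x i, mem_smoothFunctions.2 <|
    (EuclideanSpace.proj i : EuclideanSpace ℝ (Fin n) →L[ℝ] ℝ).contDiff⟩

theorem pdDerivation_coordinate (n : ℕ) (i : Fin n) :
    pdDerivation n i (coordinate n i) = 1 := by
  refine Subtype.ext <| funext fun x => ?_
  change fderiv ℝ (EuclideanSpace.proj i : EuclideanSpace ℝ (Fin n) →L[ℝ] ℝ) x _ = _
  rw [ContinuousLinearMap.fderiv]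
  simp

theorem pdDerivation_bubble (n : ℕ) (s : ℝ) (i : Fin n) :
    pdDerivation n i (bubble n s) = (2 * s) • (coordinate n i * bubble n (s - 1)) := by
  refine Subtype.ext <| funext fun x => (pd_bubble n s i x).trans ?_
  simp [coordinate, bubble, mul_assoc]

theorem sum_coordinate_mul_bubble (n : ℕ) (s : ℝ) :
    ∑ i, coordinate n i * (coordinate n i * bubble n (s - 1)) = bubble n s - bubble n (s - 1) := by
  refine Subtype.ext <| funext fun x => ?_
  have h : (1 + ‖x‖ ^ 2) ^ s = (1 + ‖x‖ ^ 2) * (1 + ‖x‖ ^ 2) ^ (s - 1) := by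
    rw [Real.rpow_sub_one (by positivity), mul_div_cancel₀ _ (by positivity)]
  rw [coe_sum_smoothFunctions]
  simp only [coordinate, bubble, MulMemClass.mk_mul_mk, AddSubgroupClass.coe_sub, Pi.sub_apply,
    Pi.mul_apply, h, ← mul_assoc, ← Finset.sum_mul]
  rw [EuclideanSpace.real_norm_sq_eq]
  simp only [← pow_two]
  ring

theorem laplacian_bubble (n : ℕ) (s : ℝ) :
    laplacian (pdDerivation n) (bubble n s)
      = (2 * s * (n + 2 * s - 2)) • bubble n (s - 1)
        - (4 * s * (s - 1)) • bubble n (s - 2) := by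
  have h := sum_coordinate_mul_bubble n (s - 1)
  rw [sub_sub, one_add_one_eq_two] at h
  simp only [laplacian, pdDerivation_bubble, Derivation.map_smul, Derivation.leibniz,
    pdDerivation_coordinate, ← Finset.smul_sum, Finset.sum_add_distrib, smul_eq_mul, mul_one,
    mul_smul_comm, sub_sub, one_add_one_eq_two, h, Finset.sum_const, Finset.card_univ,
    Fintype.card_fin]
  module

theorem bilaplacian_bubble (n : ℕ) :
    laplacian (pdDerivation n) (laplacian (pdDerivation n) (bubble n (-(((n : ℝ) - 4) / 2))))
      = (((n : ℝ) - 4) * (n - 2) * n * (n + 2)) • bubble n (-(((n : ℝ) - 4) / 2) - 4) := by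
  simp only [laplacian_bubble, laplacian_sub, laplacian_smul]
  generalize hs : -(((n : ℝ) - 4) / 2) = s
  have hn : (n : ℝ) = 4 - 2 * s := by linarith
  rw [show s - 1 - 1 = s - 2 by ring, show s - 1 - 2 = s - 3 by ring,
    show s - 2 - 1 = s - 3 by ring, show s - 2 - 2 = s - 4 by ring, hn]
  module

/-- Let `n > 4`, `w(x) = (1+|x|²)^{−(n−4)/2}`, `V` a smooth vector field on `ℝⁿ`,
`S = 𝒟V` its conformal Killing image `Sᵢⱼ = ∂ᵢVⱼ + ∂ⱼVᵢ − (2/n)(div V)δᵢⱼ`, and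
`Ψ = Vᵢ∂ᵢw + ((n−4)/(2n))(div V)w`. Then
`Δ²Ψ − (n−2)n(n+2)(n+4) w^{8/(n−4)} Ψ = −L₁[S]w + Δ(∂ᵢ(Sᵢⱼ∂ⱼw)) + ∂ᵢ(Sᵢⱼ∂ⱼΔw)`,
where `L₁[S]w = (4/(n−2))(Ṙic[S])ᵢⱼ∂²ᵢⱼw − α¹ₙ Ṙ[S]Δw − α²ₙ ∂ₖṘ[S]∂ₖw + ((n−4)/2)Q̇[S]w`
with `Ṙic[S]ᵢⱼ = ½(Sⱼₖ,ᵢₖ + Sᵢₖ,ⱼₖ − Sᵢⱼ,ₖₖ)`, `Ṙ[S] = Sᵢⱼ,ᵢⱼ`,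
`Q̇[S] = −(2(n−1))⁻¹ΔṘ[S]`, `α¹ₙ = (4+(n−2)²)/(2(n−2)(n−1))`, `α²ₙ = (n−6)/(2(n−1))`. -/
theorem conformal_killing_linearized_identity (n : ℕ) (hn : 4 < n)
    (V : Fin n → EuclideanSpace ℝ (Fin n) → ℝ)
    (hV : ∀ i, ContDiff ℝ (⊤ : ℕ∞) (V i))
    (w : EuclideanSpace ℝ (Fin n) → ℝ)
    (hw : ∀ x, w x = (1 + ‖x‖ ^ 2) ^ (-(((n : ℝ) - 4) / 2)))
    (divV : EuclideanSpace ℝ (Fin n) → ℝ)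
    (hdivV : ∀ x, divV x = ∑ k, pd n k (V k) x)
    (S : EuclideanSpace ℝ (Fin n) → Fin n → Fin n → ℝ)
    (hS : ∀ x, ∀ i j, S x i j = pd n i (V j) x + pd n j (V i) x
      - (2 / (n : ℝ)) * divV x * (if i = j then 1 else 0))
    (Ψ : EuclideanSpace ℝ (Fin n) → ℝ)
    (hΨ : ∀ x, Ψ x = (∑ i, V i x * pd n i w x) + (((n : ℝ) - 4) / (2 * (n : ℝ))) * divV x * w x)
    (Ric : EuclideanSpace ℝ (Fin n) → Fin n → Fin n → ℝ)
    (hRic : ∀ x, ∀ i j, Ric x i j = (1 / 2) * ∑ k,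
      (pd n k (pd n i (fun y => S y j k)) x + pd n k (pd n j (fun y => S y i k)) x
        - pd n k (pd n k (fun y => S y i j)) x))
    (Rdot : EuclideanSpace ℝ (Fin n) → ℝ)
    (hRdot : ∀ x, Rdot x = ∑ i, ∑ j, pd n j (pd n i (fun y => S y i j)) x)
    (Qdot : EuclideanSpace ℝ (Fin n) → ℝ)
    (hQdot : ∀ x, Qdot x = -(1 / (2 * ((n : ℝ) - 1))) * lap n Rdot x)
    (L1Sw : EuclideanSpace ℝ (Fin n) → ℝ)
    (hL1Sw : ∀ x, L1Sw x
      = (4 / ((n : ℝ) - 2)) * (∑ i, ∑ j, Ric x i j * pd n i (pd n j w) x)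
        - ((4 + ((n : ℝ) - 2) ^ 2) / (2 * ((n : ℝ) - 2) * ((n : ℝ) - 1))) * Rdot x * lap n w x
        - (((n : ℝ) - 6) / (2 * ((n : ℝ) - 1))) * (∑ k, pd n k Rdot x * pd n k w x)
        + (((n : ℝ) - 4) / 2) * Qdot x * w x)
    (x : EuclideanSpace ℝ (Fin n)) :
    lap n (lap n Ψ) x
      - ((n : ℝ) - 2) * (n : ℝ) * ((n : ℝ) + 2) * ((n : ℝ) + 4)
          * w x ^ ((8 : ℝ) / ((n : ℝ) - 4)) * Ψ x
      = - L1Sw x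
        + lap n (fun y => ∑ i, pd n i (fun z => ∑ j, S z i j * pd n j w z) y) x
        + ∑ i, pd n i (fun z => ∑ j, S z i j * pd n j (lap n w) z) x := by
  have hn' : (4 : ℝ) < n := by exact_mod_cast hn
  obtain ⟨V, rfl⟩ : ∃ V' : Fin n → smoothFunctions n, V = fun i => (V' i).1 :=
    ⟨fun i => ⟨V i, mem_smoothFunctions.2 (hV i)⟩, rfl⟩
  obtain rfl : w = (bubble n (-(((n : ℝ) - 4) / 2))).1 := funext hw
  set W := bubble n (-(((n : ℝ) - 4) / 2)) with hW
  obtain rfl : divV = (divergence (pdDerivation n) V).1 := funext fun y => by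
    rw [hdivV, divergence, coe_sum_smoothFunctions]
    rfl
  have hS' : S = fun y i j => (killing (pdDerivation n) (n : ℝ) V i j).1 y := by
    funext y i j
    rw [hS, killing]
    split_ifs <;> simp [coe_pdDerivation]
  subst hS'
  obtain rfl : Ψ = (∑ i, V i * pdDerivation n i W + (((n : ℝ) - 4) / (2 * n)) •
      (divergence (pdDerivation n) V * W)).1 := funext fun y => by
    rw [hΨ]
    simp [coe_pdDerivation, mul_assoc]
  obtain ⟨Ric', hRic'⟩ : ∃ Ric' : Fin n → Fin n → smoothFunctions n, ∀ i j, Ric' i j =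
      (1 / 2 : ℝ) • ∑ k, (pdDerivation n k (pdDerivation n i (killing (pdDerivation n) n V j k))
        + pdDerivation n k (pdDerivation n j (killing (pdDerivation n) n V i k))
        - pdDerivation n k (pdDerivation n k (killing (pdDerivation n) n V i j))) :=
    ⟨_, fun _ _ => rfl⟩
  have hRicx : Ric = fun y i j => (Ric' i j).1 y := by
    funext y i j
    rw [hRic, hRic']
    simp [coe_pdDerivation]
  subst hRicx
  obtain ⟨R', hR'⟩ : ∃ R' : smoothFunctions n, R' = ∑ i, ∑ j,
      pdDerivation n j (pdDerivation n i (killing (pdDerivation n) n V i j)) := ⟨_, rfl⟩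
  obtain rfl : Rdot = R'.1 := funext fun y => by
    rw [hRdot, hR']
    simp [coe_sum_smoothFunctions, coe_pdDerivation]
  have hdiv : ∀ f : smoothFunctions n, (fun y => ∑ i, pd n i (fun z => ∑ j,
      (killing (pdDerivation n) (n : ℝ) V i j).1 z * pd n j f.1 z) y)
      = (∑ i, pdDerivation n i (∑ j, killing (pdDerivation n) (n : ℝ) V i j
        * pdDerivation n j f) : smoothFunctions n).1 := fun f => by
    funext y
    rw [coe_sum_smoothFunctions]
    refine Finset.sum_congr rfl fun i _ => ?_
    rw [coe_pdDerivation]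
    congr 1
    funext z
    simp [coe_sum_smoothFunctions, coe_pdDerivation]
  have key := congrArg (fun f : smoothFunctions n => f.1 x) <|
    bilaplacian_conformal_lie (pdDerivation_comm n) (N := n) (by linarith) (by linarith)
      (by linarith) V W _ rfl Ric' hRic' R' hR'
  have hu : 0 < 1 + ‖x‖ ^ 2 := by positivity
  have hpow : W.1 x ^ ((8 : ℝ) / ((n : ℝ) - 4)) = (1 + ‖x‖ ^ 2) ^ (-4 : ℝ) := by
    rw [hw, ← Real.rpow_mul hu.le]
    congr 1
    have : (n : ℝ) - 4 ≠ 0 := by linarith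
    field_simp
    norm_num
  have hpot : (∑ i, V i * pdDerivation n i (laplacian (pdDerivation n)
        (laplacian (pdDerivation n) W)) + (((n : ℝ) + 4) / (2 * n)) •
        (divergence (pdDerivation n) V * laplacian (pdDerivation n)
          (laplacian (pdDerivation n) W)) : smoothFunctions n).1 x
      = ((n : ℝ) - 2) * n * (n + 2) * (n + 4) * W.1 x ^ ((8 : ℝ) / ((n : ℝ) - 4))
        * (∑ i, V i * pdDerivation n i W + (((n : ℝ) - 4) / (2 * n)) •
          (divergence (pdDerivation n) V * W) : smoothFunctions n).1 x := by
    rw [hpow, hW, bilaplacian_bubble]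
    generalize divergence (pdDerivation n) V = D
    simp only [Derivation.map_smul, pdDerivation_bubble, mul_smul_comm, ← Finset.smul_sum]
    simp only [← mul_assoc, ← Finset.sum_mul]
    generalize ∑ i, V i * coordinate n i = X
    have h (s : ℝ) : (bubble n (s - 4)).1 x = (1 + ‖x‖ ^ 2) ^ s * (1 + ‖x‖ ^ 2) ^ (-4 : ℝ) := by
      rw [← Real.rpow_add hu]
      rfl
    have h' (s : ℝ) : (bubble n (s - 4 - 1)).1 x
        = (1 + ‖x‖ ^ 2) ^ (s - 1) * (1 + ‖x‖ ^ 2) ^ (-4 : ℝ) := by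
      rw [sub_right_comm, h]
    have h'' (s : ℝ) : (bubble n s).1 x = (1 + ‖x‖ ^ 2) ^ s := rfl
    have hn₀ : (n : ℝ) ≠ 0 := by linarith
    simp only [Subalgebra.coe_add, Subalgebra.coe_mul, Subalgebra.coe_smul, Pi.add_apply,
      Pi.mul_apply, Pi.smul_apply, smul_eq_mul, h, h', h'']
    field_simp
    ring
  rw [hL1Sw, hQdot, hdiv, ← coe_laplacian, ← coe_laplacian, ← coe_laplacian, ← coe_laplacian,
    ← coe_laplacian, ← hpot]
  rw [show _ = _ from congrFun (hdiv (laplacian (pdDerivation n) W)) x]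
  simp only [Subalgebra.coe_add, Subalgebra.coe_sub, Subalgebra.coe_neg, Subalgebra.coe_mul,
    Subalgebra.coe_smul, Pi.add_apply, Pi.sub_apply, Pi.neg_apply, Pi.mul_apply, Pi.smul_apply,
    smul_eq_mul, coe_sum_smoothFunctions, coe_pdDerivation] at key ⊢
  linear_combination key
end
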